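/- Fix γ > 0 and parameters d₁, d₂, d₃ with d₁ + d₂ + d₃ = 1. Let Q : ℝ² → ℂ be smooth (infinitely differentiable) and fix (x, z) ∈ ℝ². Define ĨQ(x, z; h) = d₁·Q(x, z) + d₂·I⁽²⁾Q(x, z; h) + d₃·I⁽³⁾Q(x, z; h), where I⁽²⁾Q = (1/3)·[Q(x−h, z) + Q(x+h, z) + Q(x, z−γh) + Q(x, z+γh)] − (1/12)·[Q(x−2h, z) + Q(x+2h, z) + Q(x, z−2γh) + Q(x, z+2γh)] and I⁽³⁾Q = (1/3)·[Q(x−h, z−γh) + Q(x+h, z+γh) + Q(x−h, z+γh) + Q(x+h, z−γh)] − (1/12)·[Q(x−2h, z−2γh) + Q(x+2h, z+2γh) + Q(x−2h, z+2γh) + Q(x+2h, z−2γh)]. Then ĨQ(x, z; h) = Q(x, z) − h⁴·[((d₂ + 2d₃)/12)·(∂⁴Q/∂x⁴ + γ⁴·∂⁴Q/∂z⁴) + d₃·γ²·∂⁴Q/∂x²∂z²](x, z) + O(h⁶) as h → 0⁺. -/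

import Mathlib

noncomputable section

/-- The orthogonal-neighbor mass-lumping operator `I⁽²⁾`. -/
def I2 (γ : ℝ) (Q : ℝ × ℝ → ℂ) (x z h : ℝ) : ℂ :=
  (1 / 3) * (Q (x - h, z) + Q (x + h, z) + Q (x, z - γ * h) + Q (x, z + γ * h))
    - (1 / 12) * (Q (x - 2 * h, z) + Q (x + 2 * h, z)
        + Q (x, z - 2 * γ * h) + Q (x, z + 2 * γ * h))

/-- The diagonal-neighbor mass-lumping operator `I⁽³⁾`. -/
def I3 (γ : ℝ) (Q : ℝ × ℝ → ℂ) (x z h : ℝ) : ℂ :=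
  (1 / 3) * (Q (x - h, z - γ * h) + Q (x + h, z + γ * h)
      + Q (x - h, z + γ * h) + Q (x + h, z - γ * h))
    - (1 / 12) * (Q (x - 2 * h, z - 2 * γ * h) + Q (x + 2 * h, z + 2 * γ * h)
        + Q (x - 2 * h, z + 2 * γ * h) + Q (x + 2 * h, z - 2 * γ * h))

/-- The weighted mass-lumping operator `Ĩ` of the point-weighting 17-point scheme. -/
def Itilde (γ d₁ d₂ d₃ : ℝ) (Q : ℝ × ℝ → ℂ) (x z h : ℝ) : ℂ :=
  (d₁ : ℂ) * Q (x, z) + (d₂ : ℂ) * I2 γ Q x z h + (d₃ : ℂ) * I3 γ Q x z h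

/-- ∂⁴Q/∂x⁴ at (x, z). -/
def Dx4 (Q : ℝ × ℝ → ℂ) (x z : ℝ) : ℂ := iteratedDeriv 4 (fun t => Q (t, z)) x

/-- ∂⁴Q/∂z⁴ at (x, z). -/
def Dz4 (Q : ℝ × ℝ → ℂ) (x z : ℝ) : ℂ := iteratedDeriv 4 (fun t => Q (x, t)) z

/-- ∂⁴Q/∂x²∂z² at (x, z). -/
def Dx2z2 (Q : ℝ × ℝ → ℂ) (x z : ℝ) : ℂ :=
  iteratedDeriv 2 (fun t => iteratedDeriv 2 (fun s => Q (t, s)) z) x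

open Set

/-- one-sided Taylor -/
lemma taylor_aux (f : ℝ → ℂ) (hf : ContDiff ℝ (⊤ : ℕ∞) f) :
    ∃ C, 0 ≤ C ∧ ∀ t ∈ Icc (0:ℝ) 2, ‖f t - (f 0 + t * iteratedDeriv 1 f 0
      + t ^ 2 / 2 * iteratedDeriv 2 f 0 + t ^ 3 / 6 * iteratedDeriv 3 f 0
      + t ^ 4 / 24 * iteratedDeriv 4 f 0 + t ^ 5 / 120 * iteratedDeriv 5 f 0)‖ ≤ C * t ^ 6 := by
  obtain ⟨C, hC⟩ := exists_taylor_mean_remainder_bound (f := f) (a := 0) (b := 2) (n := 5)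
    (by norm_num) (by exact_mod_cast (contDiff_infty.1 hf 6).contDiffOn)
  refine ⟨|C|, abs_nonneg _, fun t ht => ?_⟩
  have h1 := hC t ht
  have key : ∀ k : ℕ, iteratedDerivWithin k f (Icc (0:ℝ) 2) 0 = iteratedDeriv k f 0 := fun k =>
    iteratedDerivWithin_eq_iteratedDeriv (uniqueDiffOn_Icc (by norm_num))
      ((contDiff_infty.1 hf k).contDiffAt) (by constructor <;> norm_num)
  simp only [taylorWithinEval_succ, taylor_within_zero_eval, key] at h1
  have h2 : C * (t - 0) ^ (5 + 1) ≤ |C| * t ^ 6 := by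
    rw [sub_zero]
    exact mul_le_mul_of_nonneg_right (le_abs_self C) (pow_nonneg ht.1 6)
  refine le_trans (le_of_eq ?_) (h1.trans h2)
  congr 1
  simp only [Complex.real_smul]
  push_cast [Nat.factorial]
  ring

lemma comb_aux (f : ℝ → ℂ) (hf : ContDiff ℝ (⊤ : ℕ∞) f) :
    ∃ C, 0 ≤ C ∧ ∀ h : ℝ, 0 < h → h < 1 →
      ‖(1 / 3) * (f (-h) + f h) - (1 / 12) * (f (-(2 * h)) + f (2 * h))
        - (f 0 / 2 - (h : ℂ) ^ 4 / 12 * iteratedDeriv 4 f 0)‖ ≤ C * h ^ 6 := by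
  obtain ⟨C1, hC1, H1⟩ := taylor_aux f hf
  obtain ⟨C2, hC2, H2⟩ := taylor_aux (fun t => f (-t)) (hf.comp contDiff_neg)
  refine ⟨6 * (C1 + C2), by positivity, fun h h0 h1 => ?_⟩
  have a1 := H1 h ⟨h0.le, by linarith⟩
  have a2 := H2 h ⟨h0.le, by linarith⟩
  have b1 := H1 (2 * h) ⟨by linarith, by linarith⟩
  have b2 := H2 (2 * h) ⟨by linarith, by linarith⟩
  simp only [iteratedDeriv_comp_neg, neg_zero, Complex.real_smul] at a2 b2
  set A1 := f h - _ with hA1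
  set B1 := f (2 * h) - _ with hB1
  set A2 := f (-h) - _ with hA2
  set B2 := f (-(2 * h)) - _ with hB2
  have e : (1 / 3) * (f (-h) + f h) - (1 / 12) * (f (-(2 * h)) + f (2 * h))
        - (f 0 / 2 - (h : ℂ) ^ 4 / 12 * iteratedDeriv 4 f 0)
      = (1 / 3) * (A1 + A2) - (1 / 12) * (B1 + B2) := by
    rw [hA1, hA2, hB1, hB2]
    push_cast
    ring
  rw [e]
  have n1 : ‖(1 / 3 : ℂ) * (A1 + A2) - (1 / 12) * (B1 + B2)‖
      ≤ (1 / 3) * (‖A1‖ + ‖A2‖) + (1 / 12) * (‖B1‖ + ‖B2‖) := by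
    refine (norm_sub_le _ _).trans ?_
    rw [norm_mul, norm_mul]
    have := norm_add_le A1 A2
    have := norm_add_le B1 B2
    norm_num
    linarith
  have p : 0 ≤ h ^ 6 := by positivity
  have q1 := mul_nonneg hC1 p
  have q2 := mul_nonneg hC2 p
  have r1 : C1 * (2 * h) ^ 6 = 64 * (C1 * h ^ 6) := by ring
  have r2 : C2 * (2 * h) ^ 6 = 64 * (C2 * h ^ 6) := by ring
  rw [r1] at b1
  rw [r2] at b2
  have : 6 * (C1 + C2) * h ^ 6 = 6 * (C1 * h ^ 6) + 6 * (C2 * h ^ 6) := by ring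
  linarith

/-- directional derivative -/
def DD (v : ℝ × ℝ) (R : ℝ × ℝ → ℂ) : ℝ × ℝ → ℂ := fun p => fderiv ℝ R p v

lemma DD_smooth {v : ℝ × ℝ} {R : ℝ × ℝ → ℂ} (hR : ContDiff ℝ (⊤ : ℕ∞) R) :
    ContDiff ℝ (⊤ : ℕ∞) (DD v R) :=
  (hR.fderiv_right (m := (⊤ : ℕ∞)) (by simp)).clm_apply contDiff_const

lemma sm_diff {R : ℝ × ℝ → ℂ} (hR : ContDiff ℝ (⊤ : ℕ∞) R) : Differentiable ℝ R :=
  hR.differentiable (by simp)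

lemma DD_comm {v w : ℝ × ℝ} {R : ℝ × ℝ → ℂ} (hR : ContDiff ℝ (⊤ : ℕ∞) R) :
    DD v (DD w R) = DD w (DD v R) := by
  have hd : Differentiable ℝ (fderiv ℝ R) :=
    (hR.fderiv_right (m := (⊤ : ℕ∞)) (by simp)).differentiable (by simp)
  have key : ∀ a b p, DD a (DD b R) p = fderiv ℝ (fderiv ℝ R) p a b := by
    intro a b p
    unfold DD
    rw [fderiv_clm_apply (hd p) (differentiableAt_const b)]
    simp
  funext p
  rw [key, key]
  exact (hR.contDiffAt.isSymmSndFDerivAt (by simp only [minSmoothness_of_isRCLikeNormedField]; exact WithTop.coe_le_coe.2 (le_top : (2 : ℕ∞) ≤ ⊤))) v w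

lemma DD_dir (c : ℝ) (R : ℝ × ℝ → ℂ) :
    DD (1, c) R = DD (1, 0) R + c • DD (0, 1) R := by
  funext p
  have : ((1, c) : ℝ × ℝ) = (1, 0) + c • (0, 1) := by simp
  simp only [DD, Pi.add_apply, Pi.smul_apply]
  rw [this, map_add, map_smul]

lemma DD_lin (v : ℝ × ℝ) (a b : ℝ) {A B C : ℝ × ℝ → ℂ} (hA : ContDiff ℝ (⊤ : ℕ∞) A)
    (hB : ContDiff ℝ (⊤ : ℕ∞) B) (hC : ContDiff ℝ (⊤ : ℕ∞) C) :
    DD v (A + a • B + b • C) = DD v A + a • DD v B + b • DD v C := by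
  funext p
  have h := (((sm_diff hA p).hasFDerivAt.add ((sm_diff hB p).hasFDerivAt.const_smul a)).add
    ((sm_diff hC p).hasFDerivAt.const_smul b)).fderiv
  simp only [DD, h]
  simp [DD]

lemma DD_two (c : ℝ) {R : ℝ × ℝ → ℂ} (hR : ContDiff ℝ (⊤ : ℕ∞) R) :
    DD (1, c) (DD (1, c) R) = DD (1, 0) (DD (1, 0) R) + (2 * c) • DD (1, 0) (DD (0, 1) R)
      + (c ^ 2) • DD (0, 1) (DD (0, 1) R) := by
  have hx := DD_smooth (v := (1, 0)) hR
  have hz := DD_smooth (v := (0, 1)) hR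
  have e : DD (1, c) R = DD (1, 0) R + c • DD (0, 1) R + (0:ℝ) • DD (0, 1) R := by
    rw [DD_dir]; simp
  rw [e, DD_lin _ _ _ hx hz hz, DD_dir c (DD (1, 0) R), DD_dir c (DD (0, 1) R),
    DD_comm (v := (0, 1)) (w := (1, 0)) hR]
  module

lemma DD_four (c : ℝ) {Q : ℝ × ℝ → ℂ} (hQ : ContDiff ℝ (⊤ : ℕ∞) Q) :
    DD (1, c) (DD (1, c) (DD (1, c) (DD (1, c) Q)))
     + DD (1, -c) (DD (1, -c) (DD (1, -c) (DD (1, -c) Q)))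
     = (2:ℝ) • DD (1, 0) (DD (1, 0) (DD (1, 0) (DD (1, 0) Q)))
      + (12 * c ^ 2) • DD (1, 0) (DD (1, 0) (DD (0, 1) (DD (0, 1) Q)))
      + (2 * c ^ 4) • DD (0, 1) (DD (0, 1) (DD (0, 1) (DD (0, 1) Q))) := by
  have key : ∀ c : ℝ, DD (1, c) (DD (1, c) (DD (1, c) (DD (1, c) Q)))
     = DD (1, 0) (DD (1, 0) (DD (1, 0) (DD (1, 0) Q)))
      + (4 * c) • DD (1, 0) (DD (1, 0) (DD (1, 0) (DD (0, 1) Q)))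
      + (6 * c ^ 2) • DD (1, 0) (DD (1, 0) (DD (0, 1) (DD (0, 1) Q)))
      + (4 * c ^ 3) • DD (1, 0) (DD (0, 1) (DD (0, 1) (DD (0, 1) Q)))
      + (c ^ 4) • DD (0, 1) (DD (0, 1) (DD (0, 1) (DD (0, 1) Q))) := by
    intro c
    have s : ∀ v w, ContDiff ℝ (⊤ : ℕ∞) (DD v (DD w Q)) := fun v w => DD_smooth (DD_smooth hQ)
    have s3 : ∀ u v w, ContDiff ℝ (⊤ : ℕ∞) (DD u (DD v (DD w Q))) :=
      fun u v w => DD_smooth (s v w)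
    rw [DD_two c (DD_smooth (DD_smooth hQ)), DD_two c hQ]
    simp only [DD_lin _ _ _ (s _ _) (s _ _) (s _ _), DD_lin _ _ _ (s3 _ _ _) (s3 _ _ _) (s3 _ _ _)]
    have zx : ∀ {R : ℝ × ℝ → ℂ}, ContDiff ℝ (⊤ : ℕ∞) R →
        DD (0, 1) (DD (1, 0) R) = DD (1, 0) (DD (0, 1) R) := fun h => DD_comm h
    have zx1 := zx hQ
    have zx2 := fun v => zx (DD_smooth (v := v) hQ)
    have zx3 := fun v w => zx (s v w)
    simp only [zx1, zx2, zx3]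
    module
  rw [key c, key (-c)]
  module

lemma iter_line (n : ℕ) {R : ℝ × ℝ → ℂ} (hR : ContDiff ℝ (⊤ : ℕ∞) R) (p v : ℝ × ℝ) :
    iteratedDeriv n (fun t : ℝ => R (p + t • v)) = fun t => (DD v)^[n] R (p + t • v) := by
  induction n generalizing R with
  | zero => simp
  | succ n ih =>
    rw [iteratedDeriv_succ']
    have : deriv (fun t : ℝ => R (p + t • v)) = fun t => DD v R (p + t • v) := by
      funext t
      have h1 : HasDerivAt (fun t : ℝ => p + t • v) v t := by
        simpa using ((hasDerivAt_id t).smul_const v).const_add p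
      exact ((sm_diff hR _).hasFDerivAt.comp_hasDerivAt t h1).deriv
    rw [this, ih (DD_smooth hR)]
    rfl

lemma line_smooth {R : ℝ × ℝ → ℂ} (hR : ContDiff ℝ (⊤ : ℕ∞) R) (p v : ℝ × ℝ) :
    ContDiff ℝ (⊤ : ℕ∞) (fun t : ℝ => R (p + t • v)) :=
  hR.comp (contDiff_const.add (contDiff_id.smul contDiff_const))

lemma iter_x (n : ℕ) {R : ℝ × ℝ → ℂ} (hR : ContDiff ℝ (⊤ : ℕ∞) R) (x z : ℝ) :
    iteratedDeriv n (fun t : ℝ => R (t, z)) x = (DD (1, 0))^[n] R (x, z) := by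
  have := congrFun (iter_line n hR (0, z) (1, 0)) x
  simpa using this

lemma iter_z (n : ℕ) {R : ℝ × ℝ → ℂ} (hR : ContDiff ℝ (⊤ : ℕ∞) R) (x z : ℝ) :
    iteratedDeriv n (fun t : ℝ => R (x, t)) z = (DD (0, 1))^[n] R (x, z) := by
  have := congrFun (iter_line n hR (x, 0) (0, 1)) z
  simpa using this

/-- expansion of the weighted mass-lumping operator Ĩ of the
point-weighting 17-point scheme. -/
theorem Itilde_expansion
    (γ : ℝ) (hγ : 0 < γ) (d₁ d₂ d₃ : ℝ) (hd : d₁ + d₂ + d₃ = 1)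
    (Q : ℝ × ℝ → ℂ) (hQ : ContDiff ℝ (⊤ : ℕ∞) Q) (x z : ℝ) :
    ∃ C δ : ℝ, 0 < C ∧ 0 < δ ∧ ∀ h : ℝ, 0 < h → h < δ →
      ‖Itilde γ d₁ d₂ d₃ Q x z h - (Q (x, z)
          - (h : ℂ) ^ 4 * ((((d₂ : ℂ) + 2 * (d₃ : ℂ)) / 12)
                * (Dx4 Q x z + (γ : ℂ) ^ 4 * Dz4 Q x z)
              + (d₃ : ℂ) * (γ : ℂ) ^ 2 * Dx2z2 Q x z))‖ ≤ C * h ^ 6 := by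
  have hx4 : Dx4 Q x z = DD (1, 0) (DD (1, 0) (DD (1, 0) (DD (1, 0) Q))) (x, z) := iter_x 4 hQ x z
  have hz4 : Dz4 Q x z = DD (0, 1) (DD (0, 1) (DD (0, 1) (DD (0, 1) Q))) (x, z) := iter_z 4 hQ x z
  have hxz : Dx2z2 Q x z = DD (1, 0) (DD (1, 0) (DD (0, 1) (DD (0, 1) Q))) (x, z) := by
    unfold Dx2z2
    have : (fun t => iteratedDeriv 2 (fun s => Q (t, s)) z)
        = fun t => (DD (0, 1) (DD (0, 1) Q)) (t, z) := by
      funext t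
      exact iter_z 2 hQ t z
    rw [this]
    exact iter_x 2 (DD_smooth (DD_smooth hQ)) x z
  have h4 := congrFun (DD_four γ hQ) (x, z)
  simp only [Pi.add_apply, Pi.smul_apply, Complex.real_smul] at h4
  rw [← hx4, ← hz4, ← hxz] at h4
  obtain ⟨C1, p1, H1⟩ := comb_aux _ (line_smooth hQ (x, z) (1, 0))
  obtain ⟨C2, p2, H2⟩ := comb_aux (fun t => Q (x, z + γ * t)) (hQ.comp
    (contDiff_const.prodMk (contDiff_const.add (contDiff_const.mul contDiff_id))))
  obtain ⟨C3, p3, H3⟩ := comb_aux _ (line_smooth hQ (x, z) (1, γ))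
  obtain ⟨C4, p4, H4⟩ := comb_aux _ (line_smooth hQ (x, z) (1, -γ))
  have i1 : iteratedDeriv 4 (fun t : ℝ => Q ((x, z) + t • (1, 0))) 0 = Dx4 Q x z := by
    rw [iter_line 4 hQ, hx4]; simp
  have i2 : iteratedDeriv 4 (fun t : ℝ => Q (x, z + γ * t)) 0 = (γ : ℂ) ^ 4 * Dz4 Q x z := by
    have hs : ContDiff ℝ (⊤ : ℕ∞) (fun s : ℝ => Q (x, z + s)) :=
      hQ.comp (contDiff_const.prodMk (contDiff_const.add contDiff_id))
    have e1 := congrFun (iteratedDeriv_comp_const_smul (n := 4)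
      (contDiff_infty.1 hs 4) γ) 0
    have e2 := congrFun (iteratedDeriv_comp_const_add 4 (fun s : ℝ => Q (x, s)) z) 0
    rw [e1]
    simp only [mul_zero]
    rw [e2]
    simp [Dz4]
  have i34 : iteratedDeriv 4 (fun t : ℝ => Q ((x, z) + t • (1, γ))) 0
      + iteratedDeriv 4 (fun t : ℝ => Q ((x, z) + t • (1, -γ))) 0
      = 2 * Dx4 Q x z + 12 * (γ : ℂ) ^ 2 * Dx2z2 Q x z + 2 * (γ : ℂ) ^ 4 * Dz4 Q x z := by
    rw [iter_line 4 hQ, iter_line 4 hQ]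
    simp only [zero_smul, add_zero, Function.iterate_succ, Function.iterate_zero,
      Function.comp_apply, id_eq]
    rw [h4]
    push_cast
    ring
  refine ⟨|d₂| * (C1 + C2) + |d₃| * (C3 + C4) + 1, 1, by positivity, one_pos, fun h h0 h1 => ?_⟩
  have a1 := H1 h h0 h1
  have a2 := H2 h h0 h1
  have a3 := H3 h h0 h1
  have a4 := H4 h h0 h1
  set E1 := _ - (_ - (h : ℂ) ^ 4 / 12 *
    iteratedDeriv 4 (fun t : ℝ => Q ((x, z) + t • (1, 0))) 0) with hE1
  set E2 := _ - (_ - (h : ℂ) ^ 4 / 12 *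
    iteratedDeriv 4 (fun t : ℝ => Q (x, z + γ * t)) 0) with hE2
  set E3 := _ - (_ - (h : ℂ) ^ 4 / 12 *
    iteratedDeriv 4 (fun t : ℝ => Q ((x, z) + t • (1, γ))) 0) with hE3
  set E4 := _ - (_ - (h : ℂ) ^ 4 / 12 *
    iteratedDeriv 4 (fun t : ℝ => Q ((x, z) + t • (1, -γ))) 0) with hE4
  have hd' : (d₁ : ℂ) = 1 - d₂ - d₃ := by
    have : d₁ = 1 - d₂ - d₃ := by linarith
    rw [this]; push_cast; ring
  have e : Itilde γ d₁ d₂ d₃ Q x z h - (Q (x, z)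
          - (h : ℂ) ^ 4 * ((((d₂ : ℂ) + 2 * (d₃ : ℂ)) / 12)
                * (Dx4 Q x z + (γ : ℂ) ^ 4 * Dz4 Q x z)
              + (d₃ : ℂ) * (γ : ℂ) ^ 2 * Dx2z2 Q x z))
      = (d₂ : ℂ) * (E1 + E2) + (d₃ : ℂ) * (E3 + E4) := by
    rw [i1] at hE1
    rw [i2] at hE2
    have g : ∀ s : ℝ, ((x, z) : ℝ × ℝ) + s • ((1, 0) : ℝ × ℝ) = (x + s, z) := by
      intro s; simp
    have g3 : ∀ c s : ℝ, ((x, z) : ℝ × ℝ) + s • ((1, c) : ℝ × ℝ) = (x + s, z + c * s) := by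
      intro c s; simp [mul_comm]
    have i4 := eq_sub_of_add_eq i34
    rw [hE1, hE2, hE3, hE4, i4]
    generalize iteratedDeriv 4 (fun t : ℝ => Q ((x, z) + t • (1, -γ))) 0 = W
    simp only [g3, Itilde, I2, I3, hd']
    simp only [zero_mul, mul_zero, add_zero, mul_neg, neg_mul, neg_neg, ← sub_eq_add_neg,
      neg_zero, sub_zero, sub_neg_eq_add, mul_left_comm γ 2 h, mul_assoc 2 γ h]
    ring
  rw [e]
  have n1 : ‖(d₂ : ℂ) * (E1 + E2) + (d₃ : ℂ) * (E3 + E4)‖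
      ≤ |d₂| * (C1 * h ^ 6 + C2 * h ^ 6) + |d₃| * (C3 * h ^ 6 + C4 * h ^ 6) := by
    refine (norm_add_le _ _).trans ?_
    rw [norm_mul, norm_mul, Complex.norm_real, Complex.norm_real, Real.norm_eq_abs,
      Real.norm_eq_abs]
    gcongr
    · exact (norm_add_le _ _).trans (add_le_add a1 a2)
    · exact (norm_add_le _ _).trans (add_le_add a3 a4)
  have : 0 < h ^ 6 := by positivity
  nlinarith


end
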